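/- arXiv:1911.05136 — 2 statements merged into one kernel-verified Lean document; each statement's English description precedes it below -/
import Mathlib

section
/- Let A ∈ ℂ^{m×m}, z₀ ∈ ℂ, and 0 ≤ ε₁ ≤ ε₂ be such that neither ε₁ nor ε₂ is a singular value of A − z₀I. Then 𝒜(ε₁) ⊆ 𝒜(ε₂). -/
open Complex Matrix MeasureTheory Set Polynomial Topology

noncomputable section

open scoped Classical

/-- `s` is a singular value of the square complex matrix `M`:
`s ≥ 0` and `s²` is an eigenvalue of `M Mᴴ`. -/
def IsSingularValue {k : ℕ} (M : Matrix (Fin k) (Fin k) ℂ) (s : ℝ) : Prop :=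
  0 ≤ s ∧ (M * Mᴴ - ((s : ℂ) ^ 2) • 1).det = 0

/-- The smallest singular value of `M`. -/
def sigmaMin {k : ℕ} (M : Matrix (Fin k) (Fin k) ℂ) : ℝ :=
  sInf {s : ℝ | IsSingularValue M s}

/-- The `ε`-pseudospectrum of `M`. -/
def pspec {k : ℕ} (ε : ℝ) (M : Matrix (Fin k) (Fin k) ℂ) : Set ℂ :=
  {z : ℂ | sigmaMin (M - z • 1) ≤ ε}

/-- The ray emanating from `z₀` in direction `θ`. -/
def ray (z₀ : ℂ) (θ : ℝ) : Set ℂ :=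
  {z : ℂ | ∃ r : ℝ, 0 < r ∧ z = z₀ + (r : ℂ) * Complex.exp ((θ : ℂ) * Complex.I)}

/-- The matrix `C` of the pencil `(C, D_θ)` associated with `A`, `ε`, `z₀`. -/
def pencilC {m : ℕ} (A : Matrix (Fin m) (Fin m) ℂ) (ε : ℝ) (z₀ : ℂ) :
    Matrix (Fin m ⊕ Fin m) (Fin m ⊕ Fin m) ℂ :=
  Matrix.fromBlocks (A - z₀ • 1) ((-(ε : ℂ)) • 1) ((ε : ℂ) • 1) (-(A - z₀ • 1)ᴴ)

/-- The matrix `D_θ` of the pencil `(C, D_θ)`. -/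
def pencilD (m : ℕ) (θ : ℝ) : Matrix (Fin m ⊕ Fin m) (Fin m ⊕ Fin m) ℂ :=
  Matrix.fromBlocks ((-(Complex.I * Complex.exp ((θ : ℂ) * Complex.I))) • 1) 0 0
    ((Complex.I * Complex.exp (-((θ : ℂ) * Complex.I))) • 1)

/-- The spectrum of a matrix pencil `(C, D)`: all `λ` with `det (C - λ D) = 0`. -/
def pencilSpec {k : Type} [Fintype k] [DecidableEq k] (C D : Matrix k k ℂ) : Set ℂ :=
  {lam : ℂ | (C - lam • D).det = 0}

/-- The function `a_ε(θ) = min {(Arg (-iλ))² : λ ∈ Λ(C, D_θ), Re λ ≤ 0}`. -/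
def aFun {m : ℕ} (A : Matrix (Fin m) (Fin m) ℂ) (ε : ℝ) (z₀ : ℂ) (θ : ℝ) : ℝ :=
  sInf {x : ℝ | ∃ lam ∈ pencilSpec (pencilC A ε z₀) (pencilD m θ),
    lam.re ≤ 0 ∧ x = (Complex.arg (-Complex.I * lam)) ^ 2}


/-- Shifted block form of the pencil at a purely imaginary point. -/
lemma pencil_at {m : ℕ} (A : Matrix (Fin m) (Fin m) ℂ) (ε : ℝ) (z₀ : ℂ) (θ r : ℝ) :
    pencilC A ε z₀ - (Complex.I * (r : ℂ)) • pencilD m θ =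
      Matrix.fromBlocks ((A - z₀ • 1) - ((r : ℂ) * Complex.exp ((θ : ℂ) * Complex.I)) • 1)
        ((-(ε : ℂ)) • 1) ((ε : ℂ) • 1)
        (-((A - z₀ • 1) - ((r : ℂ) * Complex.exp ((θ : ℂ) * Complex.I)) • 1)ᴴ) := by
  have hI : Complex.I * Complex.I = -1 := Complex.I_mul_I
  have hconj : (starRingEnd ℂ) (Complex.exp ((θ : ℂ) * Complex.I))
      = Complex.exp (-((θ : ℂ) * Complex.I)) := by
    rw [← Complex.exp_conj]; simp
  unfold pencilC pencilD
  rw [Matrix.fromBlocks_smul, sub_eq_add_neg, Matrix.fromBlocks_neg, Matrix.fromBlocks_add]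
  congr 1
  · rw [smul_smul, sub_eq_add_neg (A - z₀ • 1), ← neg_smul, ← neg_smul]
    congr 2
    linear_combination (r : ℂ) * Complex.exp ((θ : ℂ) * Complex.I) * hI
  · simp
  · simp
  · rw [Matrix.conjTranspose_sub (A - z₀ • 1), Matrix.conjTranspose_smul,
      Matrix.conjTranspose_one, neg_sub, smul_smul, add_comm, ← neg_smul, ← sub_eq_add_neg]
    congr 2
    rw [star_mul', Complex.star_def, hconj, Complex.conj_ofReal]
    linear_combination -(r : ℂ) * Complex.exp (-((θ : ℂ) * Complex.I)) * hI

lemma block_mulVec_zero {m : ℕ} (M : Matrix (Fin m) (Fin m) ℂ) (ε : ℝ)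
    (h : (Matrix.fromBlocks M ((-(ε : ℂ)) • (1 : Matrix (Fin m) (Fin m) ℂ))
      ((ε : ℂ) • (1 : Matrix (Fin m) (Fin m) ℂ)) (-Mᴴ)).det = 0) :
    ∃ y : Fin m → ℂ, y ≠ 0 ∧ (M * Mᴴ) *ᵥ y = ((ε : ℂ) ^ 2) • y := by
  obtain ⟨v, hv, hz⟩ := Matrix.exists_mulVec_eq_zero_iff.mpr h
  rw [Matrix.fromBlocks_mulVec] at hz
  have h1 := congrArg (fun f => f ∘ Sum.inl) hz
  have h2 := congrArg (fun f => f ∘ Sum.inr) hz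
  simp only [Sum.elim_comp_inl, Sum.elim_comp_inr, Matrix.smul_mulVec, Matrix.one_mulVec,
    Matrix.neg_mulVec, Pi.zero_comp] at h1 h2
  set x := v ∘ Sum.inl with hx
  set y := v ∘ Sum.inr with hy
  have e1 : M *ᵥ x = (ε : ℂ) • y := by
    rw [neg_smul] at h1
    exact add_neg_eq_zero.mp h1
  have e2 : (ε : ℂ) • x = Mᴴ *ᵥ y := add_neg_eq_zero.mp h2
  by_cases hy0 : y = 0
  · have hx0 : x ≠ 0 := by
      intro hx0
      apply hv
      funext i
      rcases i with i | i
      · exact congrFun hx0 i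
      · exact congrFun hy0 i
    have hε : (ε : ℂ) = 0 := by
      rw [hy0, Matrix.mulVec_zero] at e2
      exact (smul_eq_zero.mp e2).resolve_right hx0
    have hdet : M.det = 0 := Matrix.exists_mulVec_eq_zero_iff.mp ⟨x, hx0, by rw [e1, hε, zero_smul]⟩
    have hdet' : (M * Mᴴ).det = 0 := by rw [Matrix.det_mul, hdet, zero_mul]
    obtain ⟨w, hw, hw0⟩ := Matrix.exists_mulVec_eq_zero_iff.mpr hdet'
    exact ⟨w, hw, by rw [hw0, hε]; simp⟩
  · refine ⟨y, hy0, ?_⟩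
    rw [← Matrix.mulVec_mulVec, ← e2, Matrix.mulVec_smul, e1, smul_smul, sq]

lemma block_det_zero {m : ℕ} (M : Matrix (Fin m) (Fin m) ℂ) (ε : ℝ) (hε : ε ≠ 0)
    (y : Fin m → ℂ) (hy : y ≠ 0) (h : (M * Mᴴ) *ᵥ y = ((ε : ℂ) ^ 2) • y) :
    (Matrix.fromBlocks M ((-(ε : ℂ)) • (1 : Matrix (Fin m) (Fin m) ℂ))
      ((ε : ℂ) • (1 : Matrix (Fin m) (Fin m) ℂ)) (-Mᴴ)).det = 0 := by
  refine Matrix.exists_mulVec_eq_zero_iff.mp ⟨Sum.elim (Mᴴ *ᵥ y) ((ε : ℂ) • y), ?_, ?_⟩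
  · intro h0
    have h2 := congrArg (fun f => f ∘ Sum.inr) h0
    simp only [Sum.elim_comp_inr, Pi.zero_comp] at h2
    rcases smul_eq_zero.mp h2 with h3 | h3
    · exact hε (by exact_mod_cast h3)
    · exact hy h3
  · rw [Matrix.fromBlocks_mulVec]
    simp only [Sum.elim_comp_inl, Sum.elim_comp_inr, Matrix.smul_mulVec, Matrix.one_mulVec,
      Matrix.neg_mulVec, Matrix.mulVec_mulVec, Matrix.mulVec_smul, h]
    funext i
    rcases i with i | i
    · simp; ring
    · simp [Matrix.smul_mulVec]

open scoped ComplexOrder in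
/-- Quadratic form crossing: a Hermitian quadratic matrix polynomial with identity leading
coefficient that is not positive at `r₀` becomes singular at some `r ≥ r₀`. -/
lemma crossing {m : ℕ} (G L : Matrix (Fin m) (Fin m) ℂ) (hG : G.IsHermitian) (hL : L.IsHermitian)
    (r₀ : ℝ) (y : Fin m → ℂ) (hy : y ≠ 0)
    (hle : (star y ⬝ᵥ ((G + (r₀ : ℂ) • L + ((r₀ : ℂ) ^ 2) • 1) *ᵥ y)).re ≤ 0) :
    ∃ r : ℝ, r₀ ≤ r ∧ ∃ x : Fin m → ℂ, x ≠ 0 ∧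
      (G + (r : ℂ) • L + ((r : ℂ) ^ 2) • 1) *ᵥ x = 0 := by
  set S : Set (Fin m → ℂ) := Metric.sphere 0 1 with hS
  have hSc : IsCompact S := isCompact_sphere 0 1
  set q : ℝ → (Fin m → ℂ) → ℝ := fun r x =>
    (star x ⬝ᵥ ((G + (r : ℂ) • L + ((r : ℂ) ^ 2) • 1) *ᵥ x)).re with hq
  have hqc : Continuous ↿q := by
    simp only [hq, Function.HasUncurry.uncurry, id]
    fun_prop
  have hscale : ∀ r (c : ℝ) x, q r ((c : ℂ) • x) = c ^ 2 * q r x := by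
    intro r c x
    simp only [hq, Matrix.mulVec_smul, star_smul, smul_dotProduct, dotProduct_smul, smul_eq_mul,
      Complex.star_def, Complex.conj_ofReal]
    rw [Complex.re_ofReal_mul, Complex.re_ofReal_mul]
    ring
  have hnorm : ∀ x : Fin m → ℂ, x ≠ 0 → ((‖x‖⁻¹ : ℝ) : ℂ) • x ∈ S := by
    intro x hx
    have : ‖x‖ ≠ 0 := norm_ne_zero_iff.mpr hx
    simp [hS, norm_smul, this]
  have hSne : S.Nonempty := ⟨_, hnorm y hy⟩
  set f : ℝ → ℝ := fun r => sInf (q r '' S) with hf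
  have hfc : Continuous f := hSc.continuous_sInf hqc
  have hqr : ∀ r, Continuous (q r) := fun r => by
    simp only [hq]; fun_prop
  have hmin : ∀ r, ∃ x ∈ S, q r x = f r ∧ ∀ z ∈ S, f r ≤ q r z := by
    intro r
    obtain ⟨x, hx, hxe, hxl⟩ := hSc.exists_sInf_image_eq_and_le hSne (hqr r).continuousOn
    exact ⟨x, hx, hxe.symm, fun z hz => hxe.le.trans (hxl z hz)⟩
  have hf0 : f r₀ ≤ 0 := by
    obtain ⟨x, hx, hxe, hxl⟩ := hmin r₀
    refine (hxl _ (hnorm y hy)).trans ?_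
    rw [hscale]
    exact mul_nonpos_of_nonneg_of_nonpos (sq_nonneg _) hle
  -- large values
  have hbig : ∃ R, r₀ ≤ R ∧ 0 ≤ f R := by
    have c1 : Continuous fun x : Fin m → ℂ => (star x ⬝ᵥ (G *ᵥ x)).re := by fun_prop
    have c2 : Continuous fun x : Fin m → ℂ => (star x ⬝ᵥ (L *ᵥ x)).re := by fun_prop
    obtain ⟨K1, hK1⟩ := hSc.exists_bound_of_continuousOn c1.continuousOn
    obtain ⟨K2, hK2⟩ := hSc.exists_bound_of_continuousOn c2.continuousOn
    refine ⟨max r₀ 0 + 1 + |K1| + |K2|, ?_, ?_⟩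
    · have := le_max_left r₀ 0
      have := abs_nonneg K1
      have := abs_nonneg K2
      linarith
    · obtain ⟨x, hx, hxe, -⟩ := hmin (max r₀ 0 + 1 + |K1| + |K2|)
      have hR0 : 1 + |K1| + |K2| ≤ max r₀ 0 + 1 + |K1| + |K2| := by
        have := le_max_right r₀ 0
        linarith
      generalize max r₀ 0 + 1 + |K1| + |K2| = R at *
      rw [← hxe]
      have hone : 1 ≤ (star x ⬝ᵥ x).re := by
        have hx1 : ‖x‖ = 1 := by simpa [hS] using hx
        have hsum : (star x ⬝ᵥ x).re = ∑ i, ‖x i‖ ^ 2 := by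
          simp only [dotProduct, Complex.re_sum, Pi.star_apply, Complex.star_def]
          refine Finset.sum_congr rfl fun i _ => ?_
          rw [Complex.conj_mul', ← Complex.ofReal_pow, Complex.ofReal_re]
        by_contra hlt
        rw [not_le, hsum] at hlt
        have : ‖x‖ < 1 := by
          rw [pi_norm_lt_iff one_pos]
          intro i
          have hi : ‖x i‖ ^ 2 ≤ ∑ i, ‖x i‖ ^ 2 :=
            Finset.single_le_sum (f := fun i => ‖x i‖ ^ 2) (fun i _ => sq_nonneg _)
              (Finset.mem_univ i)
          nlinarith [norm_nonneg (x i)]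
        linarith
      have hexp : q R x = (star x ⬝ᵥ (G *ᵥ x)).re + R * (star x ⬝ᵥ (L *ᵥ x)).re
          + R ^ 2 * (star x ⬝ᵥ x).re := by
        simp only [hq, Matrix.add_mulVec, Matrix.smul_mulVec, Matrix.one_mulVec, dotProduct_add,
          dotProduct_smul, smul_eq_mul, Complex.add_re]
        rw [← Complex.ofReal_pow, Complex.re_ofReal_mul, Complex.re_ofReal_mul]
      rw [hexp]
      have a1 := (abs_le.mp ((hK1 x hx).trans (le_abs_self K1))).1
      have a2 := (abs_le.mp ((hK2 x hx).trans (le_abs_self K2))).1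
      have k1 := abs_nonneg K1
      have k2 := abs_nonneg K2
      have hRpos : 0 ≤ R := by linarith
      have b1 : R ^ 2 ≤ R ^ 2 * (star x ⬝ᵥ x).re := le_mul_of_one_le_right (sq_nonneg R) hone
      have b2 : R * (-|K2|) ≤ R * (star x ⬝ᵥ (L *ᵥ x)).re := mul_le_mul_of_nonneg_left a2 hRpos
      nlinarith [mul_le_mul_of_nonneg_left hR0 hRpos]
  obtain ⟨R, hR, hfR⟩ := hbig
  obtain ⟨r, hr, hfr⟩ := intermediate_value_Icc hR hfc.continuousOn
    (show (0 : ℝ) ∈ Set.Icc (f r₀) (f R) from ⟨hf0, hfR⟩)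
  obtain ⟨x, hx, hxe, hxl⟩ := hmin r
  have hx0 : x ≠ 0 := by
    rintro rfl
    simp [hS] at hx
  have hH : (G + (r : ℂ) • L + ((r : ℂ) ^ 2) • 1).IsHermitian := by
    unfold Matrix.IsHermitian
    simp [Matrix.conjTranspose_add, Matrix.conjTranspose_smul, hG.eq, hL.eq]
  have hPSD : (G + (r : ℂ) • L + ((r : ℂ) ^ 2) • 1).PosSemidef := by
    refine .of_dotProduct_mulVec_nonneg hH fun z => ?_
    rw [Complex.nonneg_iff]
    refine ⟨?_, (hH.im_star_dotProduct_mulVec_self z).symm⟩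
    by_cases hz : z = 0
    · simp [hz]
    · have h1 := hxl _ (hnorm z hz)
      rw [hfr, hscale] at h1
      have h2 : 0 < (‖z‖⁻¹) ^ 2 := by
        have := norm_pos_iff.mpr hz
        positivity
      exact nonneg_of_mul_nonneg_right h1 h2
  refine ⟨r, hr.1, x, hx0, (hPSD.dotProduct_mulVec_zero_iff x).mp ?_⟩
  apply Complex.ext
  · exact hxe.trans hfr
  · exact hH.im_star_dotProduct_mulVec_self x

lemma exp_mul_neg (θ : ℝ) : Complex.exp ((θ : ℂ) * Complex.I) *
    Complex.exp (-((θ : ℂ) * Complex.I)) = 1 := by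
  rw [← Complex.exp_add]; simp

lemma pencilSpec_eq {m : ℕ} (C : Matrix (Fin m ⊕ Fin m) (Fin m ⊕ Fin m) ℂ) (θ : ℝ) :
    ∃ T : Matrix (Fin m ⊕ Fin m) (Fin m ⊕ Fin m) ℂ,
      pencilSpec C (pencilD m θ) = spectrum ℂ T := by
  have hI : Complex.I * Complex.I = -1 := Complex.I_mul_I
  set D' : Matrix (Fin m ⊕ Fin m) (Fin m ⊕ Fin m) ℂ :=
    Matrix.fromBlocks ((Complex.I * Complex.exp (-((θ : ℂ) * Complex.I))) • 1) 0 0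
      ((-(Complex.I * Complex.exp ((θ : ℂ) * Complex.I))) • 1) with hD'
  have hinv : D' * pencilD m θ = 1 := by
    unfold pencilD
    rw [hD', Matrix.fromBlocks_multiply, ← Matrix.fromBlocks_one]
    have e := exp_mul_neg θ
    congr 1
    · rw [Matrix.mul_zero, add_zero, Matrix.smul_mul, Matrix.one_mul, smul_smul]
      convert one_smul ℂ _ using 2
      linear_combination e - Complex.exp ((θ : ℂ) * Complex.I) *
        Complex.exp (-((θ : ℂ) * Complex.I)) * hI
    · simp
    · simp
    · rw [Matrix.mul_zero, zero_add, Matrix.smul_mul, Matrix.one_mul, smul_smul]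
      convert one_smul ℂ _ using 2
      linear_combination e - Complex.exp ((θ : ℂ) * Complex.I) *
        Complex.exp (-((θ : ℂ) * Complex.I)) * hI
  have hdet : D'.det ≠ 0 := by
    intro h
    have := congrArg Matrix.det hinv
    rw [Matrix.det_mul, h, zero_mul, Matrix.det_one] at this
    exact zero_ne_one this
  refine ⟨D' * C, ?_⟩
  ext lam
  rw [spectrum.mem_iff, Matrix.isUnit_iff_isUnit_det, isUnit_iff_ne_zero, not_not]
  have : algebraMap ℂ (Matrix (Fin m ⊕ Fin m) (Fin m ⊕ Fin m) ℂ) lam - D' * C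
      = -(D' * (C - lam • pencilD m θ)) := by
    rw [Matrix.mul_sub, Matrix.mul_smul, hinv, neg_sub, Algebra.algebraMap_eq_smul_one]
  rw [this, Matrix.det_neg, Matrix.det_mul]
  simp [pencilSpec, hdet]

lemma pencil_symm {m : ℕ} (A : Matrix (Fin m) (Fin m) ℂ) (ε : ℝ) (z₀ : ℂ) (θ : ℝ) (lam : ℂ)
    (h : lam ∈ pencilSpec (pencilC A ε z₀) (pencilD m θ)) :
    -star lam ∈ pencilSpec (pencilC A ε z₀) (pencilD m θ) := by
  have hconj : (starRingEnd ℂ) (Complex.exp ((θ : ℂ) * Complex.I))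
      = Complex.exp (-((θ : ℂ) * Complex.I)) := by
    rw [← Complex.exp_conj]; simp
  have hconj' : (starRingEnd ℂ) (Complex.exp (-((θ : ℂ) * Complex.I)))
      = Complex.exp (((θ : ℂ) * Complex.I)) := by
    rw [← Complex.exp_conj]; simp
  set J : Matrix (Fin m ⊕ Fin m) (Fin m ⊕ Fin m) ℂ := Matrix.fromBlocks 0 1 (-1) 0 with hJ
  have hJJ : J * Jᴴ = 1 := by
    rw [hJ, Matrix.fromBlocks_conjTranspose, Matrix.fromBlocks_multiply, ← Matrix.fromBlocks_one]
    simp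
  have hC : pencilC A ε z₀ * J = -(J * (pencilC A ε z₀)ᴴ) := by
    unfold pencilC
    generalize A - z₀ • 1 = B
    rw [hJ, Matrix.fromBlocks_conjTranspose, Matrix.fromBlocks_multiply,
      Matrix.fromBlocks_multiply, Matrix.fromBlocks_neg]
    simp [Matrix.conjTranspose_smul]
  have hD : pencilD m θ * J = J * (pencilD m θ)ᴴ := by
    unfold pencilD
    rw [hJ, Matrix.fromBlocks_conjTranspose, Matrix.fromBlocks_multiply,
      Matrix.fromBlocks_multiply]
    simp [Matrix.conjTranspose_smul, hconj, hconj']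
  have hdet : J.det ≠ 0 := by
    intro h
    have := congrArg Matrix.det hJJ
    rw [Matrix.det_mul, h, zero_mul, Matrix.det_one] at this
    exact zero_ne_one this
  have key : (pencilC A ε z₀ - (-star lam) • pencilD m θ) * J
      = -(J * (pencilC A ε z₀ - lam • pencilD m θ)ᴴ) := by
    rw [Matrix.conjTranspose_sub, Matrix.conjTranspose_smul, Matrix.sub_mul, Matrix.mul_sub,
      Matrix.smul_mul, Matrix.mul_smul, hC, hD, neg_smul]
    abel
  have h' : (pencilC A ε z₀ - lam • pencilD m θ).det = 0 := h
  have hk := congrArg Matrix.det key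
  rw [Matrix.det_mul, Matrix.det_neg, Matrix.det_mul, Matrix.det_conjTranspose, h', star_zero,
    mul_zero, mul_zero] at hk
  exact (mul_eq_zero.mp hk).resolve_right hdet

lemma aFun_attained {m : ℕ} [NeZero m] (A : Matrix (Fin m) (Fin m) ℂ) (ε : ℝ) (z₀ : ℂ) (θ : ℝ)
    (h : aFun A ε z₀ θ = 0) :
    ∃ r : ℝ, 0 ≤ r ∧ Complex.I * (r : ℂ) ∈ pencilSpec (pencilC A ε z₀) (pencilD m θ) := by
  obtain ⟨T, hT⟩ := pencilSpec_eq (pencilC A ε z₀) θ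
  have hfin : (pencilSpec (pencilC A ε z₀) (pencilD m θ)).Finite := by
    rw [hT]; exact T.finite_spectrum
  have hne : (pencilSpec (pencilC A ε z₀) (pencilD m θ)).Nonempty := by
    rw [hT]; exact spectrum.nonempty_of_isAlgClosed_of_finiteDimensional ℂ T
  unfold aFun at h
  set X := {x : ℝ | ∃ lam ∈ pencilSpec (pencilC A ε z₀) (pencilD m θ),
    lam.re ≤ 0 ∧ x = (Complex.arg (-Complex.I * lam)) ^ 2} with hX
  have hXfin : X.Finite := by
    refine (hfin.image fun lam => (Complex.arg (-Complex.I * lam)) ^ 2).subset ?_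
    rintro x ⟨lam, hl, -, rfl⟩
    exact ⟨lam, hl, rfl⟩
  have hXne : X.Nonempty := by
    obtain ⟨lam, hl⟩ := hne
    rcases le_total lam.re 0 with h0 | h0
    · exact ⟨_, lam, hl, h0, rfl⟩
    · exact ⟨_, _, pencil_symm A ε z₀ θ lam hl, by simpa using h0, rfl⟩
  have hmem := hXne.csInf_mem hXfin
  rw [h] at hmem
  obtain ⟨lam, hl, -, h0⟩ := hmem
  have harg : Complex.arg (-Complex.I * lam) = 0 := pow_eq_zero_iff (two_ne_zero) |>.mp h0.symm
  rw [Complex.arg_eq_zero_iff] at harg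
  refine ⟨(-Complex.I * lam).re, harg.1, ?_⟩
  have : Complex.I * (((-Complex.I * lam).re : ℝ) : ℂ) = lam := by
    have e : (((-Complex.I * lam).re : ℝ) : ℂ) = -Complex.I * lam :=
      Complex.ext (by simp) (by rw [harg.2]; simp)
    rw [e]
    linear_combination -lam * Complex.I_mul_I
  rwa [this]

lemma aFun_zero_of {m : ℕ} (A : Matrix (Fin m) (Fin m) ℂ) (ε : ℝ) (z₀ : ℂ) (θ r : ℝ) (hr : 0 ≤ r)
    (h : Complex.I * (r : ℂ) ∈ pencilSpec (pencilC A ε z₀) (pencilD m θ)) :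
    aFun A ε z₀ θ = 0 := by
  unfold aFun
  apply le_antisymm
  · refine csInf_le ⟨0, ?_⟩ ⟨_, h, by simp, ?_⟩
    · rintro x ⟨lam, -, -, rfl⟩
      exact sq_nonneg _
    · have : -Complex.I * (Complex.I * (r : ℂ)) = (r : ℂ) := by
        linear_combination -(r : ℂ) * Complex.I_mul_I
      rw [this, Complex.arg_ofReal_of_nonneg hr]
      simp
  · refine Real.sInf_nonneg ?_
    rintro x ⟨lam, -, -, rfl⟩
    exact sq_nonneg _

lemma shift_expand {m : ℕ} (B : Matrix (Fin m) (Fin m) ℂ) (ε θ r : ℝ) :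
    (B - ((r : ℂ) * Complex.exp ((θ : ℂ) * Complex.I)) • 1) *
      (B - ((r : ℂ) * Complex.exp ((θ : ℂ) * Complex.I)) • 1)ᴴ - ((ε : ℂ) ^ 2) • 1 =
    (B * Bᴴ - ((ε : ℂ) ^ 2) • 1) + (r : ℂ) • (-(Complex.exp (-((θ : ℂ) * Complex.I)) • B +
      Complex.exp ((θ : ℂ) * Complex.I) • Bᴴ)) + ((r : ℂ) ^ 2) • 1 := by
  have hconj : (starRingEnd ℂ) (Complex.exp ((θ : ℂ) * Complex.I))
      = Complex.exp (-((θ : ℂ) * Complex.I)) := by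
    rw [← Complex.exp_conj]; simp
  have e := exp_mul_neg θ
  rw [Matrix.conjTranspose_sub, Matrix.conjTranspose_smul, Matrix.conjTranspose_one, star_mul',
    Complex.star_def, hconj, Complex.conj_ofReal]
  set a := Complex.exp ((θ : ℂ) * Complex.I)
  set b := Complex.exp (-((θ : ℂ) * Complex.I))
  have e2 : ((r : ℂ) ^ 2) • (1 : Matrix (Fin m) (Fin m) ℂ) = ((r * a) * (r * b)) • 1 := by
    congr 1
    linear_combination -(r : ℂ) ^ 2 * e
  rw [e2]
  simp only [Matrix.sub_mul, Matrix.mul_sub, Matrix.smul_mul, Matrix.mul_smul, Matrix.one_mul,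
    Matrix.mul_one]
  module

open scoped ComplexOrder in
lemma self_dot_nonneg {m : ℕ} (y : Fin m → ℂ) : 0 ≤ (star y ⬝ᵥ y).re :=
  (Complex.nonneg_iff.mp (dotProduct_star_self_nonneg y)).1

theorem stmt7 {m : ℕ} (A : Matrix (Fin m) (Fin m) ℂ) (z₀ : ℂ) (ε₁ ε₂ : ℝ)
    (hε₁ : 0 ≤ ε₁) (h₁₂ : ε₁ ≤ ε₂)
    (hsv₁ : ¬ IsSingularValue (A - z₀ • 1) ε₁)
    (hsv₂ : ¬ IsSingularValue (A - z₀ • 1) ε₂) :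
    {θ : ℝ | θ ∈ Set.Ioc (-Real.pi) Real.pi ∧ aFun A ε₁ z₀ θ = 0} ⊆
      {θ : ℝ | θ ∈ Set.Ioc (-Real.pi) Real.pi ∧ aFun A ε₂ z₀ θ = 0} := by
  rintro θ ⟨hθ, h0⟩
  refine ⟨hθ, ?_⟩
  rcases Nat.eq_zero_or_pos m with hm | hm
  · subst hm
    simp [aFun, pencilSpec]
  have : NeZero m := ⟨hm.ne'⟩
  rcases h₁₂.eq_or_lt with rfl | hlt
  · exact h0
  have hε₂ : ε₂ ≠ 0 := (lt_of_le_of_lt hε₁ hlt).ne'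
  obtain ⟨r₀, hr₀, hs⟩ := aFun_attained A ε₁ z₀ θ h0
  have hs' : (pencilC A ε₁ z₀ - (Complex.I * (r₀ : ℂ)) • pencilD m θ).det = 0 := hs
  rw [pencil_at] at hs'
  obtain ⟨y, hy, hye⟩ := block_mulVec_zero _ _ hs'
  set B := A - z₀ • (1 : Matrix (Fin m) (Fin m) ℂ) with hB
  have hconj : (starRingEnd ℂ) (Complex.exp ((θ : ℂ) * Complex.I))
      = Complex.exp (-((θ : ℂ) * Complex.I)) := by
    rw [← Complex.exp_conj]; simp
  have hconj' : (starRingEnd ℂ) (Complex.exp (-((θ : ℂ) * Complex.I)))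
      = Complex.exp (((θ : ℂ) * Complex.I)) := by
    rw [← Complex.exp_conj]; simp
  have hG : (B * Bᴴ - ((ε₂ : ℂ) ^ 2) • 1).IsHermitian := by
    unfold Matrix.IsHermitian
    simp [Matrix.conjTranspose_smul]
  have hL : (-(Complex.exp (-((θ : ℂ) * Complex.I)) • B +
      Complex.exp ((θ : ℂ) * Complex.I) • Bᴴ)).IsHermitian := by
    unfold Matrix.IsHermitian
    rw [Matrix.conjTranspose_neg, Matrix.conjTranspose_add, Matrix.conjTranspose_smul,
      Matrix.conjTranspose_smul, Complex.star_def, hconj, hconj',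
      Matrix.conjTranspose_conjTranspose, add_comm]
  obtain ⟨r, hr, x, hx, hxe⟩ := crossing _ _ hG hL r₀ y hy (by
    rw [← shift_expand, Matrix.sub_mulVec, hye, Matrix.smul_mulVec, Matrix.one_mulVec, ← sub_smul,
      dotProduct_smul, smul_eq_mul]
    have hc : ((ε₁ : ℂ) ^ 2 - (ε₂ : ℂ) ^ 2) = ((ε₁ ^ 2 - ε₂ ^ 2 : ℝ) : ℂ) := by push_cast; rfl
    rw [hc, Complex.re_ofReal_mul]
    refine mul_nonpos_of_nonpos_of_nonneg (by nlinarith) ?_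
    exact self_dot_nonneg y)
  rw [← shift_expand, Matrix.sub_mulVec, Matrix.smul_mulVec, Matrix.one_mulVec, sub_eq_zero] at hxe
  refine aFun_zero_of A ε₂ z₀ θ r (hr₀.trans hr) ?_
  show (pencilC A ε₂ z₀ - (Complex.I * (r : ℂ)) • pencilD m θ).det = 0
  rw [pencil_at]
  exact block_det_zero _ _ hε₂ x hx hxe
end
end

section
/- Let A ∈ ℂ^{m×m}, B ∈ ℂ^{n×n}, ε ≥ 0, and z₀ ∈ ℂ be such that ε is not a singular value of either A − z₀I or B − z₀I, and let θ ∈ (−π, π]. Then: (i) if R_{z₀}(θ) ∩ Λ_ε(A) ∩ Λ_ε(B) ≠ ∅, then a_ε(θ) + b_ε(θ) = 0; and (ii) if a_ε(θ) + b_ε(θ) = 0, then R_{z₀}(θ) ∩ Λ_ε(A) ≠ ∅ and R_{z₀}(θ) ∩ Λ_ε(B) ≠ ∅. -/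
open Complex Matrix MeasureTheory Set Polynomial Topology

noncomputable section

open scoped Classical

lemma aux_key {E : Type*} [NormedAddCommGroup E] [NormedSpace ℂ E] [ProperSpace E]
    (L : E →L[ℂ] E) (c : ℂ) (hc : ‖c‖ = 1) (ε r0 : ℝ) (v0 : E) (hv0 : ‖v0‖ = 1) (hr0 : 0 < r0)
    (h0 : ‖L v0 - ((r0 : ℂ) * c) • v0‖ ≤ ε) :
    ∃ r1 : ℝ, r0 ≤ r1 ∧ (∃ v : E, ‖v‖ = 1 ∧ ‖L v - ((r1 : ℂ) * c) • v‖ ≤ ε) ∧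
      ∀ v : E, ε * ‖v‖ ≤ ‖L v - ((r1 : ℂ) * c) • v‖ := by
  have hcont : Continuous (fun p : ℝ × E => ‖L p.2 - ((p.1 : ℂ) * c) • p.2‖) := by fun_prop
  let S : Set (ℝ × E) := {p | r0 ≤ p.1 ∧ ‖p.2‖ = 1 ∧ ‖L p.2 - ((p.1 : ℂ) * c) • p.2‖ ≤ ε}
  have hScl : IsClosed S := by
    apply IsClosed.inter (isClosed_le continuous_const continuous_fst)
    exact IsClosed.inter (isClosed_eq (by fun_prop) continuous_const)
      (isClosed_le hcont continuous_const)
  have hSsub : S ⊆ Set.Icc r0 (‖L‖ + ε) ×ˢ Metric.sphere (0 : E) 1 := by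
    rintro ⟨r, v⟩ ⟨h1, h2, h3⟩
    simp only at h1 h2 h3
    refine ⟨⟨h1, ?_⟩, by simpa using h2⟩
    have e1 : ‖((r : ℂ) * c) • v‖ = r := by
      rw [norm_smul, norm_mul, hc, h2, Complex.norm_real, Real.norm_of_nonneg (by linarith)]
      ring
    have e2 : ‖((r : ℂ) * c) • v‖ ≤ ‖L v‖ + ‖L v - ((r : ℂ) * c) • v‖ := by
      have := norm_sub_le (L v) (L v - ((r : ℂ) * c) • v)
      simpa using this
    have e3 := L.le_opNorm v
    rw [h2] at e3
    show r ≤ _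
    linarith
  have hS : IsCompact S :=
    (isCompact_Icc.prod (isCompact_sphere (0 : E) 1)).of_isClosed_subset hScl hSsub
  obtain ⟨⟨r1, v1⟩, ⟨h1, h2, h3⟩, hmax⟩ :=
    hS.exists_isMaxOn ⟨(r0, v0), le_refl _, hv0, h0⟩ continuous_fst.continuousOn
  simp only at h1 h2 h3
  have hunit : ∀ v : E, ‖v‖ = 1 → ε ≤ ‖L v - ((r1 : ℂ) * c) • v‖ := by
    intro v hv
    have hc2 : Continuous (fun r : ℝ => ‖L v - ((r : ℂ) * c) • v‖) := by fun_prop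
    have ht : Filter.Tendsto (fun r : ℝ => ‖L v - ((r : ℂ) * c) • v‖) (𝓝[>] r1)
        (𝓝 (‖L v - ((r1 : ℂ) * c) • v‖)) := (hc2.tendsto r1).mono_left nhdsWithin_le_nhds
    refine ge_of_tendsto ht ?_
    filter_upwards [self_mem_nhdsWithin] with r hr
    by_contra hlt
    have hr' : r1 < r := hr
    have : r ≤ r1 := hmax (show (r, v) ∈ S from ⟨by simp only; linarith, hv, by
      simp only; linarith⟩)
    linarith
  refine ⟨r1, h1, ⟨v1, h2, h3⟩, fun v => ?_⟩
  by_cases hv : v = 0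
  · simp [hv]
  have hn : ‖v‖ ≠ 0 := by simpa using hv
  have := hunit (((‖v‖⁻¹ : ℝ) : ℂ) • v) (by
    rw [norm_smul, Complex.norm_real, norm_inv, norm_norm, inv_mul_cancel₀ hn])
  rw [map_smul, smul_comm, ← smul_sub, norm_smul, Complex.norm_real, norm_inv, norm_norm] at this
  have hp : 0 < ‖v‖ := norm_pos_iff.mpr hv
  calc ε * ‖v‖ ≤ (‖v‖⁻¹ * ‖L v - ((r1 : ℂ) * c) • v‖) * ‖v‖ := by gcongr
    _ = _ := by field_simp

lemma aux_det {m : ℕ} (X Y : Matrix (Fin m) (Fin m) ℂ) (t : ℂ) :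
    (Matrix.fromBlocks X ((-t) • 1) (t • 1) (-Y)).det = 0 ↔
      (X * Y - (t ^ 2) • (1 : Matrix (Fin m) (Fin m) ℂ)).det = 0 := by
  by_cases ht : t = 0
  · subst ht
    simp only [neg_zero, zero_smul, Matrix.det_fromBlocks_zero₂₁]
    simp [Matrix.det_neg]
  · have hinv : Invertible (t • (1 : Matrix (Fin m) (Fin m) ℂ)) :=
      ⟨t⁻¹ • 1, by simp [smul_smul, ht], by simp [smul_smul, ht]⟩
    have hsw : (Matrix.fromBlocks X ((-t) • 1) (t • 1) (-Y)) *
        (Matrix.fromBlocks 0 1 1 0 : Matrix (Fin m ⊕ Fin m) (Fin m ⊕ Fin m) ℂ) =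
        Matrix.fromBlocks ((-t) • 1) X (-Y) (t • 1) := by
      simp [Matrix.fromBlocks_multiply]
    have hu : (Matrix.fromBlocks 0 1 1 0 : Matrix (Fin m ⊕ Fin m) (Fin m ⊕ Fin m) ℂ).det ≠ 0 := by
      intro h
      have : (Matrix.fromBlocks 0 1 1 0 : Matrix (Fin m ⊕ Fin m) (Fin m ⊕ Fin m) ℂ) *
        (Matrix.fromBlocks 0 1 1 0) = 1 := by
        simp [Matrix.fromBlocks_multiply]
      have h2 := congrArg Matrix.det this
      rw [Matrix.det_mul, h] at h2
      simp at h2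
    have h1 := congrArg Matrix.det hsw
    rw [Matrix.det_mul, Matrix.det_fromBlocks₂₂ ((-t) • 1) X (-Y) (t • 1)] at h1
    have hi : ⅟(t • (1 : Matrix (Fin m) (Fin m) ℂ)) = t⁻¹ • 1 := by
      apply invOf_eq_right_inv; simp [smul_smul, ht]
    rw [hi] at h1
    have h3 : X * Y - (t ^ 2) • (1 : Matrix (Fin m) (Fin m) ℂ) =
        t • ((-t) • 1 - X * t⁻¹ • 1 * -Y) := by
      simp [smul_sub, smul_smul, ht, pow_two]
      abel
    rw [h3, Matrix.det_smul]
    have h4 : (t • (1 : Matrix (Fin m) (Fin m) ℂ)).det ≠ 0 := by simp [Matrix.det_smul, ht]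
    constructor
    · intro h
      rw [h, zero_mul] at h1
      rcases mul_eq_zero.mp h1.symm with h5 | h5
      · exact absurd h5 h4
      · rw [h5, mul_zero]
    · intro h
      rcases mul_eq_zero.mp h with h5 | h5
      · exact absurd h5 (pow_ne_zero _ ht)
      · rw [h5, mul_zero] at h1
        exact (mul_eq_zero.mp h1).resolve_right hu

lemma aux_spec {m : ℕ} (A : Matrix (Fin m) (Fin m) ℂ) (ε : ℝ) (z₀ : ℂ) (θ : ℝ) (lam : ℂ) :
    lam ∈ pencilSpec (pencilC A ε z₀) (pencilD m θ) ↔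
    (((A - z₀ • 1) - (-(I * lam) * exp (θ * I)) • 1) *
      ((A - z₀ • 1)ᴴ - (-(I * lam) * exp (-(θ * I))) • 1) -
        ((ε : ℂ) ^ 2) • (1 : Matrix (Fin m) (Fin m) ℂ)).det = 0 := by
  rw [← aux_det]
  unfold pencilSpec pencilC pencilD
  rw [Set.mem_ofPred_eq]
  have : ∀ M N : Matrix (Fin m ⊕ Fin m) (Fin m ⊕ Fin m) ℂ, M = N → (M.det = 0 ↔ N.det = 0) := by
    rintro M N rfl; rfl
  apply this
  rw [Matrix.fromBlocks_smul, sub_eq_add_neg, Matrix.fromBlocks_neg, Matrix.fromBlocks_add]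
  congr 1
  · rw [smul_smul, ← sub_eq_add_neg]; congr 2; ring
  · simp
  · simp
  · rw [smul_smul, neg_sub', sub_neg_eq_add, ← neg_smul]
    congr 2; ring

lemma aux_symm {m : ℕ} (A : Matrix (Fin m) (Fin m) ℂ) (ε : ℝ) (z₀ : ℂ) (θ : ℝ) (lam : ℂ)
    (h : lam ∈ pencilSpec (pencilC A ε z₀) (pencilD m θ)) :
    -(starRingEnd ℂ lam) ∈ pencilSpec (pencilC A ε z₀) (pencilD m θ) := by
  rw [aux_spec] at h ⊢
  have h2 := congrArg star h
  rw [← Matrix.det_conjTranspose] at h2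
  simp only [Matrix.conjTranspose_sub, Matrix.conjTranspose_mul, Matrix.conjTranspose_smul,
    Matrix.conjTranspose_one, Matrix.conjTranspose_conjTranspose, star_zero] at h2 ⊢
  rw [← h2]
  simp [← Complex.exp_conj]

lemma aux_real {m : ℕ} (A : Matrix (Fin m) (Fin m) ℂ) (ε : ℝ) (hε : 0 ≤ ε) (z₀ : ℂ) (θ r : ℝ) :
    (I * r) ∈ pencilSpec (pencilC A ε z₀) (pencilD m θ) ↔
      IsSingularValue (A - (z₀ + r * exp (θ * I)) • 1) ε := by
  rw [aux_spec]
  unfold IsSingularValue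
  have e1 : (-(I * (I * (r : ℂ)))) = r := by rw [← mul_assoc, I_mul_I]; ring
  have e2 : A - (z₀ + r * exp (θ * I)) • 1 = A - z₀ • 1 - ((r : ℂ) * exp (θ * I)) • 1 := by
    rw [add_smul]; abel
  have e3 : (A - z₀ • 1 - ((r : ℂ) * exp (θ * I)) • 1)ᴴ =
     (A - z₀ • 1)ᴴ - ((r : ℂ) * exp (-(θ * I))) • 1 := by
    rw [Matrix.conjTranspose_sub, Matrix.conjTranspose_smul]
    simp [← Complex.exp_conj]
  rw [e1, e2, e3]
  simp [hε]

lemma aux_pspec_eq {m : ℕ} (A : Matrix (Fin m) (Fin m) ℂ) (ε : ℝ) (z₀ : ℂ) (θ : ℝ) :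
    pencilSpec (pencilC A ε z₀) (pencilD m θ) =
      spectrum ℂ ((Matrix.fromBlocks ((I * exp (-((θ : ℂ) * I))) • 1) 0 0
        ((-(I * exp ((θ : ℂ) * I))) • 1)) * pencilC A ε z₀ :
          Matrix (Fin m ⊕ Fin m) (Fin m ⊕ Fin m) ℂ) := by
  set D' : Matrix (Fin m ⊕ Fin m) (Fin m ⊕ Fin m) ℂ :=
    Matrix.fromBlocks ((I * exp (-((θ : ℂ) * I))) • 1) 0 0
        ((-(I * exp ((θ : ℂ) * I))) • 1) with hD'
  have he : exp (-((θ : ℂ) * I)) * exp ((θ : ℂ) * I) = 1 := by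
    rw [← Complex.exp_add]; simp
  have e1 : (I * exp (-((θ : ℂ) * I))) * (-(I * exp ((θ : ℂ) * I))) = 1 := by
    linear_combination (-(exp (-((θ : ℂ) * I)) * exp ((θ : ℂ) * I))) * I_mul_I + he
  have hDD : D' * pencilD m θ = 1 := by
    rw [hD', pencilD, Matrix.fromBlocks_multiply]
    simp only [Matrix.smul_mul, Matrix.mul_smul, smul_smul, Matrix.one_mul, Matrix.mul_zero,
      smul_zero, add_zero, Matrix.zero_mul, zero_add]
    rw [mul_comm (-(I * exp ((θ : ℂ) * I)))] 
    rw [e1]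
    simp
  have hdet : D'.det ≠ 0 := by
    intro h
    have := congrArg Matrix.det hDD
    rw [Matrix.det_mul, h] at this
    simp at this
  ext lam
  rw [spectrum.mem_iff, Matrix.isUnit_iff_isUnit_det, isUnit_iff_ne_zero, not_not]
  have : algebraMap ℂ (Matrix (Fin m ⊕ Fin m) (Fin m ⊕ Fin m) ℂ) lam - D' * pencilC A ε z₀ =
      -(D' * (pencilC A ε z₀ - lam • pencilD m θ)) := by
    rw [Matrix.mul_sub, Matrix.mul_smul, hDD, Algebra.algebraMap_eq_smul_one]; abel
  rw [this, Matrix.det_neg, Matrix.det_mul]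
  simp [pencilSpec, hdet]

lemma aux_quad {m : ℕ} (M : Matrix (Fin m) (Fin m) ℂ) (s : ℝ) (v : EuclideanSpace ℂ (Fin m)) :
    star v.ofLp ⬝ᵥ ((M * Mᴴ - ((s : ℂ) ^ 2) • 1) *ᵥ v.ofLp) =
      ((‖Matrix.toEuclideanCLM (n := Fin m) (𝕜 := ℂ) Mᴴ v‖ ^ 2 - s ^ 2 * ‖v‖ ^ 2 : ℝ) : ℂ) := by
  have hn : ∀ w : EuclideanSpace ℂ (Fin m), star w.ofLp ⬝ᵥ w.ofLp = ((‖w‖ ^ 2 : ℝ) : ℂ) := by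
    intro w
    rw [EuclideanSpace.norm_sq_eq, dotProduct]
    push_cast
    refine Finset.sum_congr rfl fun i _ => ?_
    rw [Pi.star_apply, Complex.star_def, mul_comm, Complex.mul_conj, Complex.normSq_eq_norm_sq]
    push_cast; rfl
  rw [Matrix.sub_mulVec, dotProduct_sub, Matrix.smul_mulVec, Matrix.one_mulVec, dotProduct_smul,
    hn, ← Matrix.mulVec_mulVec, Matrix.dotProduct_mulVec]
  have : star v.ofLp ᵥ* M = star (Mᴴ *ᵥ v.ofLp) := by
    rw [Matrix.star_mulVec, Matrix.conjTranspose_conjTranspose]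
  rw [this]
  have h2 := hn (Matrix.toEuclideanCLM (n := Fin m) (𝕜 := ℂ) Mᴴ v)
  rw [Matrix.ofLp_toEuclideanCLM] at h2
  rw [h2]
  push_cast
  simp

lemma aux_sing {m : ℕ} (M : Matrix (Fin m) (Fin m) ℂ) (s : ℝ) (h : IsSingularValue M s) :
    ∃ v : EuclideanSpace ℂ (Fin m), ‖v‖ = 1 ∧
      ‖Matrix.toEuclideanCLM (n := Fin m) (𝕜 := ℂ) Mᴴ v‖ ≤ s := by
  obtain ⟨hs, hd⟩ := h
  obtain ⟨w, hw, hw2⟩ := Matrix.exists_mulVec_eq_zero_iff.mpr hd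
  have hq := aux_quad M s (WithLp.toLp 2 w)
  rw [WithLp.ofLp_toLp, hw2, dotProduct_zero] at hq
  set v : EuclideanSpace ℂ (Fin m) := WithLp.toLp 2 w
  have hv : v ≠ 0 := by
    intro h; apply hw
    have := congrArg WithLp.ofLp h
    simpa [v] using this
  have hp : 0 < ‖v‖ := norm_pos_iff.mpr hv
  have hq2 : ‖Matrix.toEuclideanCLM (n := Fin m) (𝕜 := ℂ) Mᴴ v‖ ^ 2 - s ^ 2 * ‖v‖ ^ 2 = 0 := by
    exact_mod_cast hq.symm
  have hq3 : ‖Matrix.toEuclideanCLM (n := Fin m) (𝕜 := ℂ) Mᴴ v‖ = s * ‖v‖ := by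
    rw [← sq_eq_sq₀ (norm_nonneg _) (by positivity)]; linarith [mul_pow s ‖v‖ 2]
  refine ⟨((‖v‖⁻¹ : ℝ) : ℂ) • v, ?_, ?_⟩
  · rw [norm_smul, Complex.norm_real, norm_inv, norm_norm, inv_mul_cancel₀ hp.ne']
  · rw [map_smul, norm_smul, Complex.norm_real, norm_inv, norm_norm, hq3]
    apply le_of_eq; field_simp

open scoped ComplexOrder in
lemma aux_sing_of {m : ℕ} (M : Matrix (Fin m) (Fin m) ℂ) (s : ℝ) (hs : 0 ≤ s)
    (v : EuclideanSpace ℂ (Fin m)) (hv : ‖v‖ = 1)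
    (h1 : ‖Matrix.toEuclideanCLM (n := Fin m) (𝕜 := ℂ) Mᴴ v‖ ≤ s)
    (h2 : ∀ w, s * ‖w‖ ≤ ‖Matrix.toEuclideanCLM (n := Fin m) (𝕜 := ℂ) Mᴴ w‖) :
    IsSingularValue M s := by
  refine ⟨hs, ?_⟩
  have hps : (M * Mᴴ - ((s : ℂ) ^ 2) • 1).PosSemidef := by
    refine .of_dotProduct_mulVec_nonneg ?_ fun x => ?_
    · simp [Matrix.IsHermitian, Matrix.conjTranspose_smul]
    · have := aux_quad M s (WithLp.toLp 2 x)
      rw [WithLp.ofLp_toLp] at this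
      rw [this]
      rw [Complex.zero_le_real]
      have h3 := h2 (WithLp.toLp 2 x)
      have := pow_le_pow_left₀ (by positivity) h3 2
      rw [mul_pow] at this
      linarith
  have hz := aux_quad M s v
  have he : ‖Matrix.toEuclideanCLM (n := Fin m) (𝕜 := ℂ) Mᴴ v‖ = s := by
    apply le_antisymm h1
    simpa [hv] using h2 v
  rw [he, hv] at hz
  have hz' : star v.ofLp ⬝ᵥ ((M * Mᴴ - ((s : ℂ) ^ 2) • 1) *ᵥ v.ofLp) = 0 := by
    rw [hz]; simp
  rw [hps.dotProduct_mulVec_zero_iff] at hz'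
  refine Matrix.exists_mulVec_eq_zero_iff.mp ⟨v.ofLp, ?_, hz'⟩
  intro h
  have : v = 0 := by ext i; simpa using congrFun h i
  rw [this] at hv
  simp at hv

open scoped ComplexOrder in
lemma aux_min_mem {m : ℕ} (hm : 0 < m) (M : Matrix (Fin m) (Fin m) ℂ) :
    IsSingularValue M (sigmaMin M) := by
  have hne : {s : ℝ | IsSingularValue M s}.Nonempty := by
    have hps := Matrix.posSemidef_self_mul_conjTranspose M
    let i : Fin m := ⟨0, hm⟩
    refine ⟨Real.sqrt (hps.1.eigenvalues i), Real.sqrt_nonneg _, ?_⟩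
    refine Matrix.exists_mulVec_eq_zero_iff.mp ⟨(hps.1.eigenvectorBasis i).ofLp, ?_, ?_⟩
    · intro h
      have h0 : hps.1.eigenvectorBasis i = 0 := by ext j; simpa using congrFun h j
      have := hps.1.eigenvectorBasis.orthonormal.1 i
      rw [h0] at this; simp at this
    · rw [Matrix.sub_mulVec, hps.1.mulVec_eigenvectorBasis, Matrix.smul_mulVec,
        Matrix.one_mulVec, ← Complex.ofReal_pow, Real.sq_sqrt (hps.eigenvalues_nonneg i)]
      ext j
      simp
  have hcl : IsClosed {s : ℝ | IsSingularValue M s} := by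
    apply IsClosed.inter isClosed_Ici
    apply isClosed_eq _ continuous_const
    apply Continuous.matrix_det
    fun_prop
  exact hcl.csInf_mem hne ⟨0, fun s hs => hs.1⟩

lemma aux_nonneg {m : ℕ} (A : Matrix (Fin m) (Fin m) ℂ) (ε : ℝ) (z₀ : ℂ) (θ : ℝ) :
    0 ≤ aFun A ε z₀ θ := by
  apply Real.sInf_nonneg
  rintro x ⟨lam, -, -, rfl⟩
  positivity

lemma aux_one {m : ℕ} (A : Matrix (Fin m) (Fin m) ℂ) (ε : ℝ) (hε : 0 ≤ ε) (z₀ : ℂ) (θ : ℝ)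
    (z : ℂ) (hz : z ∈ ray z₀ θ) (hz2 : z ∈ pspec ε A) : aFun A ε z₀ θ = 0 := by
  rcases Nat.eq_zero_or_pos m with rfl | hm
  · have : {x : ℝ | ∃ lam ∈ pencilSpec (pencilC A ε z₀) (pencilD 0 θ),
        lam.re ≤ 0 ∧ x = (Complex.arg (-Complex.I * lam)) ^ 2} = ∅ := by
      ext x; simp [pencilSpec]
    rw [aFun, this, Real.sInf_empty]
  obtain ⟨r0, hr0, rfl⟩ := hz
  obtain ⟨v0, hv0, hv0'⟩ := aux_sing _ _ (aux_min_mem hm (A - (z₀ + r0 * exp (θ * I)) • 1))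
  have hle : sigmaMin (A - (z₀ + r0 * exp (θ * I)) • 1) ≤ ε := hz2
  have hL : ∀ (r : ℝ) (v : EuclideanSpace ℂ (Fin m)),
      Matrix.toEuclideanCLM (n := Fin m) (𝕜 := ℂ) (A - (z₀ + r * exp (θ * I)) • 1)ᴴ v =
      Matrix.toEuclideanCLM (n := Fin m) (𝕜 := ℂ) (A - z₀ • 1)ᴴ v -
        ((r : ℂ) * exp (-(θ * I))) • v := by
    intro r v
    have : (A - (z₀ + r * exp (θ * I)) • 1)ᴴ =
      (A - z₀ • 1)ᴴ - ((r : ℂ) * exp (-(θ * I))) • 1 := by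
      rw [add_smul, ← sub_sub, Matrix.conjTranspose_sub, Matrix.conjTranspose_smul]
      simp [← Complex.exp_conj]
    rw [this, map_sub, map_smul, map_one]
    rfl
  have hc : ‖exp (-((θ : ℂ) * I))‖ = 1 := by
    have := Complex.norm_exp_ofReal_mul_I (-θ)
    rw [← this]; push_cast; ring_nf
  rw [hL] at hv0'
  obtain ⟨r1, hr1, ⟨v, hv, hv'⟩, hall⟩ := aux_key _ _ hc ε r0 v0 hv0 hr0 (hv0'.trans hle)
  have hs := aux_sing_of (A - (z₀ + r1 * exp (θ * I)) • 1) ε hε v hv (by rw [hL]; exact hv')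
    (fun w => by rw [hL]; exact hall w)
  rw [← aux_real A ε hε] at hs
  apply le_antisymm _ (aux_nonneg A ε z₀ θ)
  apply csInf_le
  · refine ⟨0, ?_⟩
    rintro x ⟨lam, -, -, rfl⟩
    positivity
  · refine ⟨_, hs, by simp, ?_⟩
    have : -I * (I * (r1 : ℂ)) = r1 := by rw [← mul_assoc, neg_mul, I_mul_I]; ring
    rw [this, Complex.arg_ofReal_of_nonneg (by linarith)]
    simp

lemma aux_two {m : ℕ} (A : Matrix (Fin m) (Fin m) ℂ) (ε : ℝ) (hε : 0 ≤ ε) (z₀ : ℂ) (θ : ℝ)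
    (hA : ¬ IsSingularValue (A - z₀ • 1) ε) (h : aFun A ε z₀ θ = 0) :
    (ray z₀ θ ∩ pspec ε A).Nonempty := by
  rcases Nat.eq_zero_or_pos m with rfl | hm
  · refine ⟨z₀ + (1 : ℝ) * exp (θ * I), ⟨1, one_pos, rfl⟩, ?_⟩
    have : {s : ℝ | IsSingularValue (A - (z₀ + (1 : ℝ) * exp (θ * I)) • 1) s} = ∅ := by
      ext x; simp [IsSingularValue]
    show sigmaMin _ ≤ ε
    rw [sigmaMin, this, Real.sInf_empty]
    exact hε
  have hfin : (pencilSpec (pencilC A ε z₀) (pencilD m θ)).Finite := by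
    rw [aux_pspec_eq]; exact Matrix.finite_spectrum _
  have hne : (pencilSpec (pencilC A ε z₀) (pencilD m θ)).Nonempty := by
    have : Nonempty (Fin m) := ⟨⟨0, hm⟩⟩
    rw [aux_pspec_eq]; exact spectrum.nonempty_of_isAlgClosed_of_finiteDimensional ℂ _
  let S : Set ℝ := {x : ℝ | ∃ lam ∈ pencilSpec (pencilC A ε z₀) (pencilD m θ),
    lam.re ≤ 0 ∧ x = (Complex.arg (-Complex.I * lam)) ^ 2}
  have hSfin : S.Finite := by
    apply (hfin.image (fun lam => (Complex.arg (-Complex.I * lam)) ^ 2)).subset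
    rintro x ⟨lam, h1, -, rfl⟩
    exact ⟨lam, h1, rfl⟩
  have hSne : S.Nonempty := by
    obtain ⟨lam, hl⟩ := hne
    rcases le_total lam.re 0 with hr | hr
    · exact ⟨_, lam, hl, hr, rfl⟩
    · exact ⟨_, _, aux_symm A ε z₀ θ lam hl, by simpa using hr, rfl⟩
  have hmem : sInf S ∈ S := hSne.csInf_mem hSfin
  have h0 : sInf S = 0 := h
  rw [h0] at hmem
  obtain ⟨lam, hl, -, h2⟩ := hmem
  have harg : Complex.arg (-I * lam) = 0 := by
    have := h2.symm
    exact pow_eq_zero_iff (two_ne_zero) |>.mp this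
  rw [Complex.arg_eq_zero_iff] at harg
  obtain ⟨hre, him⟩ := harg
  obtain ⟨r, hr⟩ : ∃ r : ℝ, -I * lam = r := ⟨(-I * lam).re, Complex.ext (by simp) (by simpa using him)⟩
  have hlam : lam = I * r := by rw [← hr, ← mul_assoc, mul_neg, I_mul_I]; ring
  rw [hr, Complex.ofReal_re] at hre
  rw [hlam, aux_real A ε hε] at hl
  have hpos : 0 < r := by
    rcases hre.lt_or_eq with h | h
    · exact h
    · rw [← h] at hl; simp at hl; exact absurd hl hA
  exact ⟨_, ⟨r, hpos, rfl⟩, csInf_le (s := {s : ℝ | IsSingularValue _ s}) ⟨0, fun s hs => hs.1⟩ hl⟩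

theorem stmt11 {m n : ℕ} (A : Matrix (Fin m) (Fin m) ℂ) (B : Matrix (Fin n) (Fin n) ℂ)
    (ε : ℝ) (hε : 0 ≤ ε) (z₀ : ℂ)
    (hA : ¬ IsSingularValue (A - z₀ • 1) ε) (hB : ¬ IsSingularValue (B - z₀ • 1) ε)
    (θ : ℝ) (hθ : θ ∈ Set.Ioc (-Real.pi) Real.pi) :
    ((ray z₀ θ ∩ pspec ε A ∩ pspec ε B).Nonempty →
      aFun A ε z₀ θ + aFun B ε z₀ θ = 0) ∧
    (aFun A ε z₀ θ + aFun B ε z₀ θ = 0 →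
      (ray z₀ θ ∩ pspec ε A).Nonempty ∧ (ray z₀ θ ∩ pspec ε B).Nonempty) := by
  constructor
  · rintro ⟨z, ⟨h1, h2⟩, h3⟩
    rw [aux_one A ε hε z₀ θ z h1 h2, aux_one B ε hε z₀ θ z h1 h3, add_zero]
  · intro h
    have ha := aux_nonneg A ε z₀ θ
    have hb := aux_nonneg B ε z₀ θ
    exact ⟨aux_two A ε hε z₀ θ hA (by linarith), aux_two B ε hε z₀ θ hB (by linarith)⟩
end
end
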